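/- Let f be monostable (assumption (A1)), let c > c*, and let z : ℝ × [0,1] → [0,∞) be a smooth nonnegative integrable function such that there exists a smooth function u : ℝ × [0,1] → [0,1] solving f(u) + c·∂u/∂x₁ + Δu − z = 0 on the strip ℝ × [0,1], with Neumann boundary conditions ∂u/∂x₂ = 0 at x₂ = 0 and x₂ = 1, with u(x₁,x₂) → 0 as x₁ → −∞ and u(x₁,x₂) → 1 as x₁ → +∞ (uniformly in x₂), with ∇u → 0 as |x₁| → ∞, and with f∘u integrable on the strip. Then ‖z‖_{L¹(ℝ×[0,1])} ≥ C_min, where C_min = U₀'(0+) is the minimal cost of the 1-dimensional problem (P1) at speed c. -/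

import Mathlib

open Set Filter MeasureTheory

/-- A traveling profile of speed `c` for `u_t = f(u) + u_xx`. -/
def IsTravelingProfile (f : ℝ → ℝ) (c : ℝ) (U : ℝ → ℝ) : Prop :=
  ContDiff ℝ 2 U ∧ (∀ x, U x ∈ Icc (0:ℝ) 1) ∧
  (∀ x, deriv (deriv U) x + c * deriv U x + f (U x) = 0) ∧
  Tendsto U atBot (nhds 0) ∧ Tendsto U atTop (nhds 1)

/-! The argument is a calibration. Let `P` be the slope of the half-line profile seen as a function
of its height (`P (U₀ y) = U₀' y`), so that `P' = -c - f / P` and `P 0 = Cmin`. Put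
`φ s = exp (-∫₀ˢ f / P²)` and `Ψ' = (c + 2 f / P) φ = -(P φ)'`. Multiplying the equation on the
strip by `φ(u)` and completing the square in `∂₁u / P(u)` gives
`z ≥ φ(u) z ≥ div (φ(u) ∇u + Ψ(u) e₁)`,
and by the divergence theorem the cost of `z` is at least `Ψ 1 - Ψ 0`, which formally is
`P 0 φ(0) - P 1 φ(1) = Cmin`. Since `P` vanishes at height `1`, the profile is cut at a height `s₀`
close to `1`, beyond which `P` is continued by a constant; the error vanishes as `s₀ → 1`. -/

open scoped Topology

section PartialDerivatives

variable {E : Type*} [NormedAddCommGroup E] [NormedSpace ℝ E] {F : ℝ → ℝ → E}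

lemma deriv_left_eq_fderiv_uncurry {x y : ℝ}
    (hF : DifferentiableAt ℝ (Function.uncurry F) (x, y)) :
    deriv (fun t => F t y) x = fderiv ℝ (Function.uncurry F) (x, y) (1, 0) :=
  (hF.hasFDerivAt.comp_hasDerivAt (f := fun t => (t, y)) x
    ((hasDerivAt_id x).prodMk (hasDerivAt_const x y))).deriv

lemma deriv_right_eq_fderiv_uncurry {x y : ℝ}
    (hF : DifferentiableAt ℝ (Function.uncurry F) (x, y)) :
    deriv (F x) y = fderiv ℝ (Function.uncurry F) (x, y) (0, 1) :=
  (hF.hasFDerivAt.comp_hasDerivAt y ((hasDerivAt_const y x).prodMk (hasDerivAt_id y))).deriv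

variable {m n : WithTop ℕ∞}

lemma contDiff_uncurry_deriv_left (hF : ContDiff ℝ m (Function.uncurry F)) (hnm : n + 1 ≤ m) :
    ContDiff ℝ n (Function.uncurry fun x y => deriv (fun t => F t y) x) :=
  ContDiff.fderiv_apply (f := fun (p : ℝ × ℝ) t => F t p.2) (g := Prod.fst) (k := fun _ => 1)
    (hF.comp (contDiff_snd.prodMk (contDiff_snd.comp contDiff_fst))) contDiff_fst contDiff_const hnm

lemma contDiff_uncurry_deriv_right (hF : ContDiff ℝ m (Function.uncurry F)) (hnm : n + 1 ≤ m) :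
    ContDiff ℝ n (Function.uncurry fun x y => deriv (F x) y) :=
  ContDiff.fderiv_apply (f := fun (p : ℝ × ℝ) t => F p.1 t) (g := Prod.snd) (k := fun _ => 1)
    (hF.comp ((contDiff_fst.comp contDiff_fst).prodMk contDiff_snd)) contDiff_snd contDiff_const hnm

end PartialDerivatives

section Divergence

variable {F G z : ℝ → ℝ → ℝ} {α β : ℝ}

lemma integral_divergence_rectangle (hαβ : α ≤ β) {a b : ℝ} (hab : a ≤ b)
    (hF : ContDiff ℝ 1 (Function.uncurry F)) (hG : ContDiff ℝ 1 (Function.uncurry G))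
    (hGα : ∀ x, G x α = 0) (hGβ : ∀ x, G x β = 0) :
    ∫ p in Icc a b ×ˢ Icc α β, (deriv (fun t => F t p.2) p.1 + deriv (G p.1) p.2)
      = (∫ y in α..β, F b y) - ∫ y in α..β, F a y := by
  have hF' := hF.differentiable one_ne_zero
  have hG' := hG.differentiable one_ne_zero
  have hdiv : (fun p : ℝ × ℝ => deriv (fun t => F t p.2) p.1 + deriv (G p.1) p.2) = fun p =>
      fderiv ℝ (Function.uncurry F) p (1, 0) + fderiv ℝ (Function.uncurry G) p (0, 1) :=
    funext fun p => congrArg₂ (· + ·) (deriv_left_eq_fderiv_uncurry (hF' p))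
      (deriv_right_eq_fderiv_uncurry (hG' p))
  have hcont : Continuous fun p =>
      fderiv ℝ (Function.uncurry F) p (1, 0) + fderiv ℝ (Function.uncurry G) p (0, 1) :=
    ((hF.continuous_fderiv one_ne_zero).clm_apply continuous_const).add
      ((hG.continuous_fderiv one_ne_zero).clm_apply continuous_const)
  rw [Icc_prod_Icc, hdiv, integral_divergence_prod_Icc_of_hasFDerivAt_of_le
    (Function.uncurry F) (Function.uncurry G) _ _ (a, α) (b, β) ⟨hab, hαβ⟩
    hF.continuous.continuousOn hG.continuous.continuousOn
    (fun p _ => (hF' p).hasFDerivAt) (fun p _ => (hG' p).hasFDerivAt)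
    (hcont.continuousOn.integrableOn_compact isCompact_Icc)]
  simp [Function.uncurry, hGα, hGβ]

lemma integral_flux_sub_le_of_divergence_le (hαβ : α ≤ β) {a b : ℝ} (hab : a ≤ b)
    (hF : ContDiff ℝ 1 (Function.uncurry F)) (hG : ContDiff ℝ 1 (Function.uncurry G))
    (hGα : ∀ x, G x α = 0) (hGβ : ∀ x, G x β = 0)
    (hz : ∀ x, ∀ y ∈ Icc α β, 0 ≤ z x y)
    (hzint : IntegrableOn (fun p : ℝ × ℝ => z p.1 p.2) (univ ×ˢ Icc α β))
    (hdiv : ∀ x, ∀ y ∈ Icc α β, deriv (fun t => F t y) x + deriv (G x) y ≤ z x y) :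
    (∫ y in α..β, F b y) - ∫ y in α..β, F a y ≤ ∫ p in univ ×ˢ Icc α β, z p.1 p.2 := by
  have hsub : Icc a b ×ˢ Icc α β ⊆ univ ×ˢ Icc α β := prod_mono_left (subset_univ _)
  have hcont : Continuous fun p : ℝ × ℝ => deriv (fun t => F t p.2) p.1 + deriv (G p.1) p.2 :=
    (contDiff_uncurry_deriv_left (n := 0) hF (by simp)).continuous.add
      (contDiff_uncurry_deriv_right (n := 0) hG (by simp)).continuous
  calc (∫ y in α..β, F b y) - ∫ y in α..β, F a y
      = ∫ p in Icc a b ×ˢ Icc α β, (deriv (fun t => F t p.2) p.1 + deriv (G p.1) p.2) :=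
        (integral_divergence_rectangle hαβ hab hF hG hGα hGβ).symm
    _ ≤ ∫ p in Icc a b ×ˢ Icc α β, z p.1 p.2 :=
        setIntegral_mono_on
          (hcont.continuousOn.integrableOn_compact (isCompact_Icc.prod isCompact_Icc))
          (hzint.mono_set hsub) (measurableSet_Icc.prod measurableSet_Icc)
          fun p hp => hdiv p.1 p.2 hp.2
    _ ≤ ∫ p in univ ×ˢ Icc α β, z p.1 p.2 :=
        setIntegral_mono_set hzint
          (ae_restrict_of_forall_mem (MeasurableSet.univ.prod measurableSet_Icc)
            fun p hp => hz p.1 p.2 hp.2)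
          hsub.eventuallyLE

end Divergence

section Calibration

/-- A controlled traveling profile `u` of speed `c` on the strip `ℝ × [0,1]` with control `z ≥ 0` of
finite cost. The limits `u → 0`, `u → 1`, `∂₁u → 0` are uniform in the cross-section variable. -/
structure IsControlledStripProfile (f : ℝ → ℝ) (c : ℝ) (u z : ℝ → ℝ → ℝ) : Prop where
  contDiff : ContDiff ℝ 2 (Function.uncurry u)
  mem_Icc : ∀ x₁, ∀ x₂ ∈ Icc (0 : ℝ) 1, u x₁ x₂ ∈ Icc (0 : ℝ) 1
  control_nonneg : ∀ x₁, ∀ x₂ ∈ Icc (0 : ℝ) 1, 0 ≤ z x₁ x₂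
  control_integrableOn : IntegrableOn (fun p : ℝ × ℝ => z p.1 p.2) (univ ×ˢ Icc (0 : ℝ) 1)
  pde : ∀ x₁, ∀ x₂ ∈ Icc (0 : ℝ) 1,
    f (u x₁ x₂) + c * deriv (fun t => u t x₂) x₁
      + (deriv (deriv (fun t => u t x₂)) x₁ + deriv (deriv (u x₁)) x₂) - z x₁ x₂ = 0
  neumann : ∀ x₁, deriv (u x₁) 0 = 0 ∧ deriv (u x₁) 1 = 0
  tendsto_atBot : TendstoUniformlyOn u (fun _ => 0) atBot (Icc 0 1)
  tendsto_atTop : TendstoUniformlyOn u (fun _ => 1) atTop (Icc 0 1)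
  tendsto_deriv :
    TendstoUniformlyOn (fun x₁ x₂ => deriv (fun t => u t x₂) x₁) (fun _ => 0) (cocompact ℝ)
      (Icc 0 1)

/-- A weight `φ` and a potential `Ψ` which turn the equation of speed `c` into the differential
inequality `div (φ(u) ∇u + Ψ(u) e₁) ≤ z`; in `mul_deriv_le` the variable `a` stands for `∂₁u`. -/
structure IsCalibration (f : ℝ → ℝ) (c : ℝ) (φ Ψ : ℝ → ℝ) : Prop where
  contDiff_weight : ContDiff ℝ 1 φ
  contDiff_potential : ContDiff ℝ 1 Ψ
  weight_le_one : ∀ s ∈ Icc (0 : ℝ) 1, φ s ≤ 1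
  deriv_weight_nonpos : ∀ s ∈ Icc (0 : ℝ) 1, deriv φ s ≤ 0
  mul_deriv_le : ∀ s ∈ Icc (0 : ℝ) 1, ∀ a,
    deriv Ψ s * a ≤ (f s + c * a) * φ s - deriv φ s * a ^ 2

lemma hasDerivAt_comp_mul_deriv {φ w : ℝ → ℝ} (hφ : Differentiable ℝ φ) (hw : ContDiff ℝ 2 w)
    (x : ℝ) : HasDerivAt (fun t => φ (w t) * deriv w t)
      (deriv φ (w x) * deriv w x ^ 2 + φ (w x) * deriv (deriv w) x) x := by
  have hw₁ : HasDerivAt w (deriv w x) x := (hw.differentiable two_ne_zero x).hasDerivAt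
  have hw₂ : HasDerivAt (deriv w) (deriv (deriv w) x) x :=
    (hw.differentiable_deriv_two x).hasDerivAt
  exact (((hφ (w x)).hasDerivAt.comp x hw₁).mul hw₂).congr_deriv
    (by simp only [Function.comp_apply]; ring)

lemma tendsto_integral_flux {u v : ℝ → ℝ → ℝ} {φ Ψ : ℝ → ℝ} {l : Filter ℝ}
    [l.IsCountablyGenerated] {s : ℝ}
    (hu : Continuous (Function.uncurry u)) (hv : Continuous (Function.uncurry v))
    (hφ : Continuous φ) (hΨ : Continuous Ψ)
    (hul : TendstoUniformlyOn u (fun _ => s) l (Icc 0 1))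
    (hvl : TendstoUniformlyOn v (fun _ => 0) l (Icc 0 1)) :
    Tendsto (fun x => ∫ y in (0 : ℝ)..1, (φ (u x y) * v x y + Ψ (u x y))) l (𝓝 (Ψ s)) := by
  rw [← tendsto_prod_principal_iff] at hul hvl
  have hflux : TendstoUniformlyOn (fun x y => φ (u x y) * v x y + Ψ (u x y))
      (fun _ => φ s * 0 + Ψ s) l (Icc 0 1) :=
    tendsto_prod_principal_iff.1 <|
      (((hφ.tendsto s).comp hul).mul hvl).add ((hΨ.tendsto s).comp hul)
  have hcont : ∀ x, Continuous fun y => φ (u x y) * v x y + Ψ (u x y) := fun x =>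
    ((hφ.comp (hu.comp (by fun_prop : Continuous fun y => (x, y)))).mul
      (hv.comp (by fun_prop : Continuous fun y => (x, y)))).add
      (hΨ.comp (hu.comp (by fun_prop : Continuous fun y => (x, y))))
  rw [← uIcc_of_le zero_le_one] at hflux
  simpa using hflux.tendsto_intervalIntegral_of_continuousOn (μ := volume)
    (Eventually.of_forall fun x => (hcont x).continuousOn)

variable {f : ℝ → ℝ} {c : ℝ} {u z : ℝ → ℝ → ℝ} {φ Ψ : ℝ → ℝ}

lemma IsCalibration.divergence_le (hcal : IsCalibration f c φ Ψ)
    (hu : IsControlledStripProfile f c u z) (x₁ : ℝ) {x₂ : ℝ} (hx₂ : x₂ ∈ Icc (0 : ℝ) 1) :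
    deriv (fun t => φ (u t x₂) * deriv (fun t => u t x₂) t + Ψ (u t x₂)) x₁
      + deriv (fun t => φ (u x₁ t) * deriv (u x₁) t) x₂ ≤ z x₁ x₂ := by
  have hφ := hcal.contDiff_weight.differentiable one_ne_zero
  have hw₁ : ContDiff ℝ 2 fun t => u t x₂ := hu.contDiff.comp (contDiff_prodMk_left x₂)
  have hw₂ : ContDiff ℝ 2 (u x₁) := hu.contDiff.comp (contDiff_prodMk_right x₁)
  have hΨ : HasDerivAt (fun t => Ψ (u t x₂)) (deriv Ψ (u x₁ x₂) * deriv (fun t => u t x₂) x₁) x₁ :=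
    (hcal.contDiff_potential.differentiable one_ne_zero _).hasDerivAt.comp x₁
      (hw₁.differentiable two_ne_zero x₁).hasDerivAt
  rw [((hasDerivAt_comp_mul_deriv hφ hw₁ x₁).fun_add hΨ).deriv,
    (hasDerivAt_comp_mul_deriv hφ hw₂ x₂).deriv]
  have hmem := hu.mem_Icc x₁ x₂ hx₂
  set s := u x₁ x₂
  set a := deriv (fun t => u t x₂) x₁
  set b := deriv (u x₁) x₂
  have hpde : (f s + c * a) * φ s
      + φ s * (deriv (deriv fun t => u t x₂) x₁ + deriv (deriv (u x₁)) x₂) = φ s * z x₁ x₂ := by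
    linear_combination φ s * hu.pde x₁ x₂ hx₂
  have hweight : φ s * z x₁ x₂ ≤ z x₁ x₂ :=
    mul_le_of_le_one_left (hu.control_nonneg x₁ x₂ hx₂) (hcal.weight_le_one s hmem)
  have htransverse : deriv φ s * b ^ 2 ≤ 0 :=
    mul_nonpos_of_nonpos_of_nonneg (hcal.deriv_weight_nonpos s hmem) (sq_nonneg b)
  linarith [hcal.mul_deriv_le s hmem a]

theorem IsCalibration.potential_sub_le_cost (hcal : IsCalibration f c φ Ψ)
    (hu : IsControlledStripProfile f c u z) :
    Ψ 1 - Ψ 0 ≤ ∫ p in univ ×ˢ Icc (0 : ℝ) 1, z p.1 p.2 := by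
  have hu₁ : ContDiff ℝ 1 (Function.uncurry u) := hu.contDiff.of_le one_le_two
  have hux := contDiff_uncurry_deriv_left (n := 1) hu.contDiff one_add_one_eq_two.le
  have huy := contDiff_uncurry_deriv_right (n := 1) hu.contDiff one_add_one_eq_two.le
  set I : ℝ → ℝ := fun x => ∫ y in (0 : ℝ)..1,
    (φ (u x y) * deriv (fun t => u t y) x + Ψ (u x y))
  have hflux : ∀ R ≥ 0, I R - I (-R) ≤ ∫ p in univ ×ˢ Icc (0 : ℝ) 1, z p.1 p.2 := fun R hR =>
    integral_flux_sub_le_of_divergence_le zero_le_one (neg_le_self hR)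
      (F := fun x y => φ (u x y) * deriv (fun t => u t y) x + Ψ (u x y))
      (((hcal.contDiff_weight.comp hu₁).mul hux).add (hcal.contDiff_potential.comp hu₁))
      (G := fun x y => φ (u x y) * deriv (u x) y) ((hcal.contDiff_weight.comp hu₁).mul huy)
      (fun x => by simp only [(hu.neumann x).1, mul_zero])
      (fun x => by simp only [(hu.neumann x).2, mul_zero])
      hu.control_nonneg hu.control_integrableOn fun x y hy => hcal.divergence_le hu x hy
  have hlim : ∀ {l : Filter ℝ} [l.IsCountablyGenerated] {s : ℝ}, l ≤ cocompact ℝ →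
      TendstoUniformlyOn u (fun _ => s) l (Icc 0 1) → Tendsto I l (𝓝 (Ψ s)) := fun hl hul =>
    tendsto_integral_flux hu₁.continuous hux.continuous hcal.contDiff_weight.continuous
      hcal.contDiff_potential.continuous hul fun V hV => (hu.tendsto_deriv V hV).filter_mono hl
  refine le_of_tendsto ((hlim atTop_le_cocompact hu.tendsto_atTop).sub
    ((hlim atBot_le_cocompact hu.tendsto_atBot).comp tendsto_neg_atTop_atBot)) ?_
  filter_upwards [eventually_ge_atTop 0] with R hR using hflux R hR

end Calibration

section PhasePlaneCalibration

/-- The weight `φ(s) = exp (-∫₀ˢ f / P²)` attached to a phase-plane slope `P`. -/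
noncomputable def phasePlaneWeight (f P : ℝ → ℝ) (s : ℝ) : ℝ :=
  Real.exp (-∫ t in (0 : ℝ)..s, f t / P t ^ 2)

/-- The potential with derivative `(c + 2 f / P) φ`, which equals `-(P φ)'` wherever
`P' = -c - f / P`. -/
noncomputable def phasePlanePotential (f : ℝ → ℝ) (c : ℝ) (P : ℝ → ℝ) (s : ℝ) : ℝ :=
  ∫ t in (0 : ℝ)..s, (c + 2 * (f t / P t)) * phasePlaneWeight f P t

variable {f P : ℝ → ℝ} {c : ℝ}

lemma phasePlaneWeight_zero : phasePlaneWeight f P 0 = 1 := by simp [phasePlaneWeight]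

lemma phasePlaneWeight_pos (s : ℝ) : 0 < phasePlaneWeight f P s := Real.exp_pos _

lemma phasePlaneWeight_le_one (hfnonneg : ∀ s ∈ Icc (0 : ℝ) 1, 0 ≤ f s) {s : ℝ}
    (hs : s ∈ Icc (0 : ℝ) 1) : phasePlaneWeight f P s ≤ 1 :=
  Real.exp_le_one_iff.2 <| neg_nonpos.2 <| intervalIntegral.integral_nonneg hs.1 fun t ht =>
    div_nonneg (hfnonneg t ⟨ht.1, ht.2.trans hs.2⟩) (sq_nonneg _)

lemma hasDerivAt_phasePlaneWeight (hf : Continuous f) (hP : Continuous P) (hPpos : ∀ s, 0 < P s)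
    (s : ℝ) :
    HasDerivAt (phasePlaneWeight f P) (-(f s / P s ^ 2) * phasePlaneWeight f P s) s := by
  have hcont : Continuous fun t => f t / P t ^ 2 :=
    hf.div₀ (hP.pow 2) fun t => (pow_pos (hPpos t) 2).ne'
  exact (hcont.integral_hasStrictDerivAt 0 s).hasDerivAt.neg.exp.congr_deriv (mul_comm _ _)

lemma continuous_phasePlaneWeight (hf : Continuous f) (hP : Continuous P) (hPpos : ∀ s, 0 < P s) :
    Continuous (phasePlaneWeight f P) :=
  continuous_iff_continuousAt.2 fun s => (hasDerivAt_phasePlaneWeight hf hP hPpos s).continuousAt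

lemma continuous_deriv_phasePlanePotential (hf : Continuous f) (hP : Continuous P)
    (hPpos : ∀ s, 0 < P s) :
    Continuous fun s => (c + 2 * (f s / P s)) * phasePlaneWeight f P s :=
  (continuous_const.add (continuous_const.mul (hf.div₀ hP fun s => (hPpos s).ne'))).mul
    (continuous_phasePlaneWeight hf hP hPpos)

lemma hasDerivAt_phasePlanePotential (hf : Continuous f) (hP : Continuous P)
    (hPpos : ∀ s, 0 < P s) (s : ℝ) :
    HasDerivAt (phasePlanePotential f c P) ((c + 2 * (f s / P s)) * phasePlaneWeight f P s) s :=
  ((continuous_deriv_phasePlanePotential hf hP hPpos).integral_hasStrictDerivAt 0 s).hasDerivAt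

lemma contDiff_one_of_hasDerivAt {g g' : ℝ → ℝ} (hg : ∀ s, HasDerivAt g (g' s) s)
    (hg' : Continuous g') : ContDiff ℝ 1 g :=
  contDiff_one_iff_deriv.2 ⟨fun s => (hg s).differentiableAt, by
    rwa [show deriv g = g' from funext fun s => (hg s).deriv]⟩

lemma isCalibration_phasePlane (hf : Continuous f) (hfnonneg : ∀ s ∈ Icc (0 : ℝ) 1, 0 ≤ f s)
    (hP : Continuous P) (hPpos : ∀ s, 0 < P s) :
    IsCalibration f c (phasePlaneWeight f P) (phasePlanePotential f c P) where
  contDiff_weight := contDiff_one_of_hasDerivAt (hasDerivAt_phasePlaneWeight hf hP hPpos)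
    ((hf.div₀ (hP.pow 2) fun t => (pow_pos (hPpos t) 2).ne').neg.mul
      (continuous_phasePlaneWeight hf hP hPpos))
  contDiff_potential := contDiff_one_of_hasDerivAt (hasDerivAt_phasePlanePotential hf hP hPpos)
    (continuous_deriv_phasePlanePotential hf hP hPpos)
  weight_le_one _ hs := phasePlaneWeight_le_one hfnonneg hs
  deriv_weight_nonpos s hs := by
    rw [(hasDerivAt_phasePlaneWeight hf hP hPpos s).deriv]
    exact mul_nonpos_of_nonpos_of_nonneg
      (neg_nonpos.2 (div_nonneg (hfnonneg s hs) (sq_nonneg _))) (phasePlaneWeight_pos s).le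
  mul_deriv_le s hs a := by
    rw [(hasDerivAt_phasePlaneWeight hf hP hPpos s).deriv,
      (hasDerivAt_phasePlanePotential hf hP hPpos s).deriv]
    have hsquare : 0 ≤ f s * (a / P s - 1) ^ 2 * phasePlaneWeight f P s :=
      mul_nonneg (mul_nonneg (hfnonneg s hs) (sq_nonneg _)) (phasePlaneWeight_pos s).le
    linear_combination hsquare

lemma phasePlanePotential_eq_of_hasDerivAt (hf : Continuous f) (hP : Continuous P)
    (hPpos : ∀ s, 0 < P s) {s₀ : ℝ} (hs₀ : 0 ≤ s₀)
    (hPderiv : ∀ s ∈ Ioo 0 s₀, HasDerivAt P (-c - f s / P s) s) :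
    phasePlanePotential f c P s₀ = P 0 - P s₀ * phasePlaneWeight f P s₀ := by
  have hφ := continuous_phasePlaneWeight hf hP hPpos
  have hderiv : ∀ s ∈ Ioo 0 s₀, HasDerivAt (fun t => -(P t * phasePlaneWeight f P t))
      ((c + 2 * (f s / P s)) * phasePlaneWeight f P s) s := fun s hs => by
    refine ((hPderiv s hs).mul (hasDerivAt_phasePlaneWeight hf hP hPpos s)).neg.congr_deriv ?_
    have := hPpos s
    field_simp
    ring
  rw [phasePlanePotential, intervalIntegral.integral_eq_sub_of_hasDerivAt_of_le hs₀
    (f := fun t => -(P t * phasePlaneWeight f P t)) (hP.mul hφ).neg.continuousOn hderiv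
    ((continuous_deriv_phasePlanePotential hf hP hPpos).intervalIntegrable _ _),
    phasePlaneWeight_zero]
  ring

lemma neg_abs_mul_le_phasePlanePotential_sub (hf : Continuous f)
    (hfnonneg : ∀ s ∈ Icc (0 : ℝ) 1, 0 ≤ f s) (hP : Continuous P) (hPpos : ∀ s, 0 < P s) {s₀ : ℝ}
    (hs₀ : s₀ ∈ Icc (0 : ℝ) 1) :
    -(|c| * (1 - s₀)) ≤ phasePlanePotential f c P 1 - phasePlanePotential f c P s₀ := by
  have hint := (continuous_deriv_phasePlanePotential (c := c) hf hP hPpos).intervalIntegrable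
    (μ := volume)
  have hlower : ∀ s ∈ Icc s₀ 1, -|c| ≤ (c + 2 * (f s / P s)) * phasePlaneWeight f P s := by
    intro s hs
    have hs' : s ∈ Icc (0 : ℝ) 1 := ⟨hs₀.1.trans hs.1, hs.2⟩
    have hφpos := phasePlaneWeight_pos (f := f) (P := P) s
    calc -|c| ≤ -|c| * phasePlaneWeight f P s :=
          le_mul_of_le_one_right (neg_nonpos.2 (abs_nonneg c))
            (phasePlaneWeight_le_one hfnonneg hs')
      _ ≤ (c + 2 * (f s / P s)) * phasePlaneWeight f P s := by
          have := div_nonneg (hfnonneg s hs') (hPpos s).le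
          gcongr
          linarith [neg_abs_le c]
  calc -(|c| * (1 - s₀)) = ∫ _ in s₀..1, -|c| := by
        rw [intervalIntegral.integral_const, smul_eq_mul]; ring
    _ ≤ ∫ s in s₀..1, (c + 2 * (f s / P s)) * phasePlaneWeight f P s :=
        intervalIntegral.integral_mono_on hs₀.2 intervalIntegrable_const (hint _ _) hlower
    _ = phasePlanePotential f c P 1 - phasePlanePotential f c P s₀ :=
        (intervalIntegral.integral_interval_sub_left (hint _ _) (hint _ _)).symm

lemma le_phasePlanePotential_sub (hf : Continuous f) (hfnonneg : ∀ s ∈ Icc (0 : ℝ) 1, 0 ≤ f s)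
    (hP : Continuous P) (hPpos : ∀ s, 0 < P s) {s₀ : ℝ} (hs₀ : s₀ ∈ Icc (0 : ℝ) 1)
    (hPderiv : ∀ s ∈ Ioo 0 s₀, HasDerivAt P (-c - f s / P s) s) :
    P 0 - P s₀ - |c| * (1 - s₀) ≤ phasePlanePotential f c P 1 - phasePlanePotential f c P 0 := by
  have hzero : phasePlanePotential f c P 0 = 0 := intervalIntegral.integral_same
  have hmid := phasePlanePotential_eq_of_hasDerivAt hf hP hPpos hs₀.1 hPderiv
  have hlast := neg_abs_mul_le_phasePlanePotential_sub (c := c) hf hfnonneg hP hPpos hs₀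
  have hweight : P s₀ * phasePlaneWeight f P s₀ ≤ P s₀ :=
    mul_le_of_le_one_right (hPpos s₀).le (phasePlaneWeight_le_one hfnonneg hs₀)
  linarith

end PhasePlaneCalibration

section OneVariable

variable {U q : ℝ → ℝ}

lemma exists_continuous_inverse_of_hasDerivAt_pos {a b : ℝ} (hab : a ≤ b)
    (hU : ContinuousOn U (Icc a b))
    (hderiv : ∀ y ∈ Ioo a b, HasDerivAt U (q y) y) (hpos : ∀ y ∈ Ioo a b, 0 < q y) :
    ∃ Y : ℝ → ℝ, Continuous Y ∧ (∀ s, Y s ∈ Icc a b) ∧ (∀ y ∈ Icc a b, Y (U y) = y) ∧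
      ∀ s ∈ Ioo (U a) (U b), U (Y s) = s ∧ Y s ∈ Ioo a b ∧ HasDerivAt Y (q (Y s))⁻¹ s := by
  have hmono : StrictMonoOn U (Icc a b) :=
    strictMonoOn_of_hasDerivWithinAt_pos (convex_Icc a b) hU
      (by simpa only [interior_Icc] using fun y hy => (hderiv y hy).hasDerivWithinAt)
      (by simpa only [interior_Icc] using hpos)
  have hle : U a ≤ U b := hmono.monotoneOn (left_mem_Icc.2 hab) (right_mem_Icc.2 hab) hab
  have hmaps : MapsTo U (Icc a b) (Icc (U a) (U b)) := hmono.monotoneOn.mapsTo_Icc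
  have hsurj : Function.Surjective hmaps.restrict := fun ⟨s, hs⟩ =>
    let ⟨y, hy, hys⟩ := intermediate_value_Icc hab hU hs
    ⟨⟨y, hy⟩, Subtype.ext hys⟩
  have hmono' : StrictMono hmaps.restrict := fun x y hxy => hmono x.2 y.2 hxy
  let e : Icc a b ≃o Icc (U a) (U b) := hmono'.orderIsoOfSurjective _ hsurj
  let Y : ℝ → ℝ := IccExtend hle fun s => (e.symm s : ℝ)
  have hYcont : Continuous Y := (continuous_subtype_val.comp e.symm.continuous).Icc_extend'
  have hYmem : ∀ s, Y s ∈ Icc a b := fun s => (e.symm (projIcc _ _ hle s)).2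
  have hYU : ∀ y ∈ Icc a b, Y (U y) = y := fun y hy =>
    (IccExtend_of_mem _ _ (hmaps hy)).trans (congrArg Subtype.val (e.symm_apply_apply ⟨y, hy⟩))
  have hUY : ∀ s ∈ Icc (U a) (U b), U (Y s) = s := fun s hs =>
    (congrArg U (IccExtend_of_mem _ _ hs)).trans (congrArg Subtype.val (e.apply_symm_apply ⟨s, hs⟩))
  refine ⟨Y, hYcont, hYmem, hYU, fun s hs => ?_⟩
  have hs' := hUY s (Ioo_subset_Icc_self hs)
  have hY : Y s ∈ Ioo a b :=
    ⟨(hmono.lt_iff_lt (left_mem_Icc.2 hab) (hYmem s)).1 (hs'.symm ▸ hs.1),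
      (hmono.lt_iff_lt (hYmem s) (right_mem_Icc.2 hab)).1 (hs'.symm ▸ hs.2)⟩
  refine ⟨hs', hY, HasDerivAt.of_local_left_inverse hYcont.continuousAt (hderiv _ hY)
    (hpos _ hY).ne' ?_⟩
  filter_upwards [Icc_mem_nhds hs.1 hs.2] using hUY

lemma exists_near_limit_with_small_deriv {L : ℝ} (hU : Continuous U)
    (hq : Continuous q) (hderiv : ∀ y > 0, HasDerivAt U (q y) y) (hU₀ : U 0 < L)
    (hle : ∀ y, U y ≤ L) (hlim : Tendsto U atTop (𝓝 L)) {ε : ℝ} (hε : 0 < ε) :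
    ∃ y > 0, L - ε < U y ∧ U y < L ∧ q y < ε := by
  by_cases hlt : ∀ y > 0, U y < L
  · obtain ⟨N, hN⟩ := eventually_atTop.1 (hlim.eventually (lt_mem_nhds (sub_lt_self L hε)))
    obtain ⟨a, ha, haN⟩ : ∃ a, 0 < a ∧ N ≤ a :=
      ⟨max N 1, one_pos.trans_le (le_max_right _ _), le_max_left _ _⟩
    obtain ⟨y, hy, hqy⟩ := exists_hasDerivAt_eq_slope U q (lt_add_one a) hU.continuousOn
      fun x hx => hderiv x (ha.trans hx.1)
    have hy₀ : 0 < y := ha.trans hy.1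
    refine ⟨y, hy₀, hN y (haN.trans hy.1.le), hlt y hy₀, ?_⟩
    rw [hqy, add_sub_cancel_left, div_one]
    linarith [hN a haN, hle (a + 1)]
  · push Not at hlt
    obtain ⟨b, hb, hLb⟩ := hlt
    obtain ⟨y₁, ⟨hy₁, hLy₁⟩, hleast⟩ : ∃ y₁, IsLeast (Icc 0 b ∩ {y | L ≤ U y}) y₁ :=
      (isCompact_Icc.inter_right (isClosed_le continuous_const hU)).exists_isLeast
        ⟨b, ⟨hb.le, le_rfl⟩, hLb⟩
    have hUy₁ : U y₁ = L := (hle y₁).antisymm hLy₁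
    have hy₁pos : 0 < y₁ := hy₁.1.lt_of_ne (by rintro rfl; exact hU₀.ne hUy₁)
    have hqy₁ : q y₁ = 0 :=
      IsLocalMax.hasDerivAt_eq_zero (Eventually.of_forall fun x => hUy₁ ▸ hle x) (hderiv y₁ hy₁pos)
    have hnear : ∀ᶠ y in 𝓝[<] y₁, L - ε < U y ∧ q y < ε ∧ 0 < y :=
      nhdsWithin_le_nhds <| (hU.continuousAt.eventually (lt_mem_nhds (by linarith))).and <|
        (hq.continuousAt.eventually (gt_mem_nhds (by linarith))).and (lt_mem_nhds hy₁pos)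
    obtain ⟨y, ⟨hUy, hqy, hy⟩, hyy₁⟩ := (hnear.and self_mem_nhdsWithin).exists
    refine ⟨y, hy, hUy, not_le.1 fun hLy => ?_, hqy⟩
    exact (hleast ⟨⟨hy.le, (le_of_lt hyy₁).trans hy₁.2⟩, hLy⟩).not_gt hyy₁

end OneVariable

section HalfLineProfile

/-- A profile of speed `c` on the half line: it starts at height `0` with slope `C`, solves the
uncontrolled equation and converges to `1`. The optimal controlled profile of the 1-dimensional
problem is of this kind, and `C` is then its cost. The slope is one-sided, so that `U` may vanish
on the negative half line. -/
structure IsHalfLineProfile (f : ℝ → ℝ) (c : ℝ) (U : ℝ → ℝ) (C : ℝ) : Prop where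
  continuous : Continuous U
  mem_Icc : ∀ x, U x ∈ Icc (0 : ℝ) 1
  map_zero : U 0 = 0
  contDiffOn : ContDiffOn ℝ 2 U (Ioi 0)
  ode : ∀ x > (0 : ℝ), deriv (deriv U) x + c * deriv U x + f (U x) = 0
  tendsto_atTop : Tendsto U atTop (𝓝 1)
  hasDerivWithinAt_zero : HasDerivWithinAt U C (Ioi 0) 0

/-- The slope of a half-line profile, obtained by integrating the equation once. Unlike `deriv U` it
is continuous up to `0`. -/
noncomputable def profileSlope (f : ℝ → ℝ) (c : ℝ) (U : ℝ → ℝ) (C y : ℝ) : ℝ :=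
  C - c * U y - ∫ t in (0 : ℝ)..y, f (U t)

variable {f U : ℝ → ℝ} {c C : ℝ}

namespace IsHalfLineProfile

lemma profileSlope_zero (hU : IsHalfLineProfile f c U C) : profileSlope f c U C 0 = C := by
  simp [profileSlope, hU.map_zero]

lemma continuous_profileSlope (hU : IsHalfLineProfile f c U C) (hf : Continuous f) :
    Continuous (profileSlope f c U C) :=
  (continuous_const.sub (continuous_const.mul hU.continuous)).sub <|
    intervalIntegral.continuous_primitive
      (fun _ _ => (hf.comp hU.continuous).intervalIntegrable _ _) 0

lemma differentiableOn (hU : IsHalfLineProfile f c U C) : DifferentiableOn ℝ U (Ioi 0) :=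
  hU.contDiffOn.differentiableOn two_ne_zero

lemma hasDerivAt_deriv (hU : IsHalfLineProfile f c U C) {y : ℝ} (hy : 0 < y) :
    HasDerivAt U (deriv U y) y :=
  (hU.differentiableOn.differentiableAt (Ioi_mem_nhds hy)).hasDerivAt

lemma hasDerivAt_profileSlope_of_deriv (hU : IsHalfLineProfile f c U C) (hf : Continuous f) {y : ℝ}
    (hy : 0 < y) : HasDerivAt (profileSlope f c U C) (-c * deriv U y - f (U y)) y :=
  ((((hU.hasDerivAt_deriv hy).const_mul c).const_sub C).sub
    ((hf.comp hU.continuous).integral_hasStrictDerivAt 0 y).hasDerivAt).congr_deriv (by simp)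

-- Both sides have the same derivative by the equation; their difference is `0` because the
-- one-sided slope at `0` is `C`.
lemma deriv_eq_profileSlope (hU : IsHalfLineProfile f c U C) (hf : Continuous f) :
    EqOn (deriv U) (profileSlope f c U C) (Ioi 0) := by
  have hdiff : DifferentiableOn ℝ (deriv U) (Ioi 0) :=
    (hU.contDiffOn.deriv_of_isOpen isOpen_Ioi one_add_one_eq_two.le).differentiableOn one_ne_zero
  obtain ⟨k, hk⟩ := isOpen_Ioi.exists_eq_add_of_deriv_eq isPreconnected_Ioi hdiff
    (fun y hy => (hU.hasDerivAt_profileSlope_of_deriv hf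
      hy).differentiableAt.differentiableWithinAt)
    fun y hy => by
      rw [(hU.hasDerivAt_profileSlope_of_deriv hf hy).deriv]
      linarith [hU.ode y hy]
  have hlim : Tendsto (deriv U) (𝓝[>] 0) (𝓝 (C + k)) := by
    rw [← hU.profileSlope_zero]
    exact (((hU.continuous_profileSlope hf).add continuous_const).tendsto 0).mono_left
      nhdsWithin_le_nhds |>.congr' (hk.symm.eventuallyEq_of_mem self_mem_nhdsWithin)
  have hslope : HasDerivWithinAt U (C + k) (Ioi 0) 0 :=
    (hasDerivWithinAt_Ici_of_tendsto_deriv hU.differentiableOn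
      hU.continuous.continuousWithinAt self_mem_nhdsWithin hlim).mono Ioi_subset_Ici_self
  have hk₀ : C + k = C :=
    (uniqueDiffWithinAt_Ioi 0).eq_deriv _ hslope hU.hasDerivWithinAt_zero
  simpa only [add_eq_left.1 hk₀, add_zero] using hk

lemma hasDerivAt (hU : IsHalfLineProfile f c U C) (hf : Continuous f) {y : ℝ} (hy : 0 < y) :
    HasDerivAt U (profileSlope f c U C y) y :=
  hU.deriv_eq_profileSlope hf hy ▸ hU.hasDerivAt_deriv hy

lemma hasDerivAt_profileSlope (hU : IsHalfLineProfile f c U C) (hf : Continuous f) {y : ℝ}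
    (hy : 0 < y) : HasDerivAt (profileSlope f c U C) (-c * profileSlope f c U C y - f (U y)) y :=
  hU.deriv_eq_profileSlope hf hy ▸ hU.hasDerivAt_profileSlope_of_deriv hf hy

lemma antitoneOn_exp_mul_profileSlope (hU : IsHalfLineProfile f c U C) (hf : Continuous f)
    (hfnonneg : ∀ s ∈ Icc (0 : ℝ) 1, 0 ≤ f s) :
    AntitoneOn (fun y => Real.exp (c * y) * profileSlope f c U C y) (Ici 0) := by
  have hderiv : ∀ y > 0, HasDerivAt (fun y => Real.exp (c * y) * profileSlope f c U C y)
      (-(Real.exp (c * y) * f (U y))) y := fun y hy =>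
    ((((hasDerivAt_id y).const_mul c).exp).mul (hU.hasDerivAt_profileSlope hf hy)).congr_deriv
      (by simp only [id, mul_one]; ring)
  refine antitoneOn_of_hasDerivWithinAt_nonpos (convex_Ici 0)
    ((by fun_prop : Continuous fun y => Real.exp (c * y)).mul
      (hU.continuous_profileSlope hf)).continuousOn
    (by rw [interior_Ici]; exact fun y hy => (hderiv y hy).hasDerivWithinAt) fun y _ => ?_
  exact neg_nonpos.2 (mul_nonneg (Real.exp_pos _).le (hfnonneg _ (hU.mem_Icc y)))

-- Once the slope is nonpositive it stays so, and then `U` cannot increase to its limit `1`.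
lemma profileSlope_pos_of_lt_one (hU : IsHalfLineProfile f c U C) (hf : Continuous f)
    (hfnonneg : ∀ s ∈ Icc (0 : ℝ) 1, 0 ≤ f s) {y₀ : ℝ} (hy₀ : U y₀ < 1) :
    ∀ y ∈ Icc 0 y₀, 0 < profileSlope f c U C y := by
  intro y hy
  by_contra! hneg
  have hneg' : ∀ x ≥ y, profileSlope f c U C x ≤ 0 := fun x hx => by
    have hdecay := hU.antitoneOn_exp_mul_profileSlope hf hfnonneg hy.1 (hy.1.trans hx) hx
    exact nonpos_of_mul_nonpos_right
      (hdecay.trans (mul_nonpos_of_nonneg_of_nonpos (Real.exp_pos _).le hneg)) (Real.exp_pos _)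
  have hanti : AntitoneOn U (Ici y) :=
    antitoneOn_of_hasDerivWithinAt_nonpos (convex_Ici y) hU.continuous.continuousOn
      (by rw [interior_Ici]
          exact fun x hx => (hU.hasDerivAt hf (hy.1.trans_lt hx)).hasDerivWithinAt)
      (by rw [interior_Ici]; exact fun x hx => hneg' x (le_of_lt hx))
  refine hy₀.not_ge (le_of_tendsto hU.tendsto_atTop ?_)
  filter_upwards [eventually_ge_atTop y₀] with x hx using hanti hy.2 (hy.2.trans hx) hx

lemma exists_phasePlane_slope (hU : IsHalfLineProfile f c U C) (hf : Continuous f)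
    (hfnonneg : ∀ s ∈ Icc (0 : ℝ) 1, 0 ≤ f s) {y₀ : ℝ} (hy₀ : 0 < y₀) (hUy₀ : U y₀ < 1) :
    ∃ P : ℝ → ℝ, Continuous P ∧ (∀ s, 0 < P s) ∧ P 0 = C ∧
      P (U y₀) = profileSlope f c U C y₀ ∧
      ∀ s ∈ Ioo 0 (U y₀), HasDerivAt P (-c - f s / P s) s := by
  have hpos := hU.profileSlope_pos_of_lt_one hf hfnonneg hUy₀
  obtain ⟨Y, hYcont, hYmem, hYU, hUY⟩ := exists_continuous_inverse_of_hasDerivAt_pos hy₀.le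
    hU.continuous.continuousOn (fun y hy => hU.hasDerivAt hf hy.1)
    fun y hy => hpos y (Ioo_subset_Icc_self hy)
  refine ⟨fun s => profileSlope f c U C (Y s), (hU.continuous_profileSlope hf).comp hYcont,
    fun s => hpos _ (hYmem s), ?_, ?_, fun s hs => ?_⟩
  · have hY₀ : Y 0 = 0 := by simpa only [hU.map_zero] using hYU 0 (left_mem_Icc.2 hy₀.le)
    simp only [hY₀, hU.profileSlope_zero]
  · simp only [hYU y₀ (right_mem_Icc.2 hy₀.le)]
  · rw [← hU.map_zero] at hs
    obtain ⟨hUYs, hYs, hYderiv⟩ := hUY s hs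
    refine ((hU.hasDerivAt_profileSlope hf hYs.1).comp s hYderiv).congr_deriv ?_
    have := hpos _ (hYmem s)
    rw [hUYs]
    field_simp

theorem exists_isCalibration (hU : IsHalfLineProfile f c U C) (hf : Continuous f)
    (hfnonneg : ∀ s ∈ Icc (0 : ℝ) 1, 0 ≤ f s) {ε : ℝ} (hε : 0 < ε) :
    ∃ φ Ψ, IsCalibration f c φ Ψ ∧ C - ε ≤ Ψ 1 - Ψ 0 := by
  obtain ⟨δ, hδ, hδε⟩ : ∃ δ > 0, δ + |c| * δ = ε :=
    ⟨ε / (1 + |c|), by positivity, by field_simp⟩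
  obtain ⟨y₀, hy₀, hnear, hlt, hslope⟩ := exists_near_limit_with_small_deriv hU.continuous
    (hU.continuous_profileSlope hf) (fun y hy => hU.hasDerivAt hf hy)
    (hU.map_zero.trans_lt one_pos) (fun y => (hU.mem_Icc y).2) hU.tendsto_atTop hδ
  obtain ⟨P, hP, hPpos, hP₀, hPy₀, hPderiv⟩ := hU.exists_phasePlane_slope hf hfnonneg hy₀ hlt
  refine ⟨_, _, isCalibration_phasePlane hf hfnonneg hP hPpos, ?_⟩
  have hgain := le_phasePlanePotential_sub hf hfnonneg hP hPpos (hU.mem_Icc y₀) hPderiv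
  have hcut : |c| * (1 - U y₀) ≤ |c| * δ :=
    mul_le_mul_of_nonneg_left (by linarith) (abs_nonneg c)
  rw [hP₀, hPy₀] at hgain
  linarith

end IsHalfLineProfile

end HalfLineProfile

lemma nonneg_on_unitInterval_of_deriv2_neg {f : ℝ → ℝ} (hf : Continuous f)
    (hf0 : f 0 = 0) (hf1 : f 1 = 0) (hf'' : ∀ v ∈ Icc (0 : ℝ) 1, deriv (deriv f) v < 0) :
    ∀ s ∈ Icc (0 : ℝ) 1, 0 ≤ f s := fun s hs => by
  have hconcave : StrictConcaveOn ℝ (Icc 0 1) f :=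
    strictConcaveOn_of_deriv2_neg (convex_Icc 0 1) hf.continuousOn fun v hv =>
      hf'' v (interior_subset hv)
  simpa only [hf0, hf1, min_self] using hconcave.concaveOn.min_le_of_mem_Icc
    (left_mem_Icc.2 zero_le_one) (right_mem_Icc.2 zero_le_one) hs

section UniformLimits

variable {ι : Type*} {s : Set ι} {w : ℝ → ι → ℝ}

lemma tendstoUniformlyOn_zero_atBot (hw : ∀ x, ∀ y ∈ s, 0 ≤ w x y)
    (hlim : ∀ ε > (0 : ℝ), ∃ M : ℝ, ∀ x ≤ -M, ∀ y ∈ s, w x y ≤ ε) :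
    TendstoUniformlyOn w (fun _ => 0) atBot s := by
  refine Metric.tendstoUniformlyOn_iff.2 fun ε hε => ?_
  obtain ⟨M, hM⟩ := hlim (ε / 2) (half_pos hε)
  filter_upwards [eventually_le_atBot (-M)] with x hx y hy
  rw [dist_zero_left, Real.norm_of_nonneg (hw x y hy)]
  exact (hM x hx y hy).trans_lt (half_lt_self hε)

lemma tendstoUniformlyOn_one_atTop (hw : ∀ x, ∀ y ∈ s, w x y ≤ 1)
    (hlim : ∀ ε > (0 : ℝ), ∃ M : ℝ, ∀ x ≥ M, ∀ y ∈ s, 1 - ε ≤ w x y) :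
    TendstoUniformlyOn w (fun _ => 1) atTop s := by
  refine Metric.tendstoUniformlyOn_iff.2 fun ε hε => ?_
  obtain ⟨M, hM⟩ := hlim (ε / 2) (half_pos hε)
  filter_upwards [eventually_ge_atTop M] with x hx y hy
  rw [Real.dist_eq, abs_of_nonneg (sub_nonneg.2 (hw x y hy))]
  linarith [hM x hx y hy]

lemma tendstoUniformlyOn_zero_cocompact
    (hlim : ∀ ε > (0 : ℝ), ∃ M : ℝ, ∀ x : ℝ, M ≤ |x| → ∀ y ∈ s, |w x y| ≤ ε) :
    TendstoUniformlyOn w (fun _ => 0) (cocompact ℝ) s := by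
  refine Metric.tendstoUniformlyOn_iff.2 fun ε hε => ?_
  obtain ⟨M, hM⟩ := hlim (ε / 2) (half_pos hε)
  filter_upwards [(tendsto_norm_cocompact_atTop (E := ℝ)).eventually_ge_atTop M] with x hx y hy
  rw [dist_zero_left]
  exact (hM x hx y hy).trans_lt (half_lt_self hε)

end UniformLimits

theorem two_dim_cost_lower_bound_general {f : ℝ → ℝ} (hf : Continuous f)
    (hfnonneg : ∀ s ∈ Icc (0 : ℝ) 1, 0 ≤ f s) {c : ℝ} {U₀ : ℝ → ℝ} {Cmin : ℝ}
    (hU₀ : IsHalfLineProfile f c U₀ Cmin) {u z : ℝ → ℝ → ℝ}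
    (hu : IsControlledStripProfile f c u z) :
    Cmin ≤ ∫ p in univ ×ˢ Icc (0 : ℝ) 1, z p.1 p.2 := by
  refine le_of_forall_pos_le_add fun ε hε => ?_
  obtain ⟨φ, Ψ, hcal, hgain⟩ := hU₀.exists_isCalibration hf hfnonneg hε
  linarith [hcal.potential_sub_le_cost hu]

/-- monostable case. Any controlled traveling profile on the
2-dimensional strip `ℝ × [0,1]` with speed `c` requires a control effort at least
equal to the 1-dimensional minimal cost `C_min = U₀'(0+)`. -/
theorem two_dim_cost_lower_bound
    (f : ℝ → ℝ) (hf : ContDiff ℝ 2 f) (hf0 : f 0 = 0) (hf1 : f 1 = 0)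
    (hf'' : ∀ v ∈ Icc (0:ℝ) 1, deriv (deriv f) v < 0)
    (cstar : ℝ) (hchar : ∀ c', (∃ U, IsTravelingProfile f c' U) ↔ c' ≤ cstar)
    (c : ℝ) (hc : cstar < c)
    -- the optimal 1-d controlled profile `U₀` and its cost `Cmin = U₀'(0+)`
    (U₀ : ℝ → ℝ) (Cmin : ℝ)
    (hU₀cont : Continuous U₀) (hU₀mono : Monotone U₀)
    (hU₀range : ∀ x, U₀ x ∈ Icc (0:ℝ) 1)
    (hU₀zero : ∀ x ≤ (0:ℝ), U₀ x = 0)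
    (hU₀smooth : ContDiffOn ℝ 2 U₀ (Ioi 0))
    (hU₀ode : ∀ x > (0:ℝ), deriv (deriv U₀) x + c * deriv U₀ x + f (U₀ x) = 0)
    (hU₀top : Tendsto U₀ atTop (nhds 1))
    (hCmin : HasDerivWithinAt U₀ Cmin (Ioi 0) 0) (hCminpos : 0 < Cmin)
    -- a controlled 2-d traveling profile `u` with control `z ≥ 0` on the strip
    (u z : ℝ → ℝ → ℝ)
    (hu : ContDiff ℝ 2 (Function.uncurry u))
    (hz : Continuous (Function.uncurry z))
    (hznonneg : ∀ x₁ x₂, 0 ≤ z x₁ x₂)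
    (hurange : ∀ x₁ x₂, u x₁ x₂ ∈ Icc (0:ℝ) 1)
    (hpde : ∀ x₁ : ℝ, ∀ x₂ ∈ Icc (0:ℝ) 1,
      f (u x₁ x₂) + c * deriv (fun t => u t x₂) x₁
        + (deriv (deriv (fun t => u t x₂)) x₁ + deriv (deriv (u x₁)) x₂)
        - z x₁ x₂ = 0)
    (hneumann : ∀ x₁ : ℝ, deriv (u x₁) 0 = 0 ∧ deriv (u x₁) 1 = 0)
    (hlim0 : ∀ ε > (0:ℝ), ∃ M : ℝ, ∀ x₁ ≤ -M, ∀ x₂ ∈ Icc (0:ℝ) 1, u x₁ x₂ ≤ ε)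
    (hlim1 : ∀ ε > (0:ℝ), ∃ M : ℝ, ∀ x₁ ≥ M, ∀ x₂ ∈ Icc (0:ℝ) 1, 1 - ε ≤ u x₁ x₂)
    (hgrad : ∀ ε > (0:ℝ), ∃ M : ℝ, ∀ x₁ : ℝ, M ≤ |x₁| → ∀ x₂ ∈ Icc (0:ℝ) 1,
      |deriv (fun t => u t x₂) x₁| ≤ ε ∧ |deriv (u x₁) x₂| ≤ ε)
    (hzint : IntegrableOn (fun p : ℝ × ℝ => z p.1 p.2) (univ ×ˢ Icc (0:ℝ) 1))
    (hfint : IntegrableOn (fun p : ℝ × ℝ => f (u p.1 p.2)) (univ ×ˢ Icc (0:ℝ) 1)) :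
    Cmin ≤ ∫ p in univ ×ˢ Icc (0:ℝ) 1, z p.1 p.2 := by
  have hprofile : IsHalfLineProfile f c U₀ Cmin :=
    { continuous := hU₀cont
      mem_Icc := hU₀range
      map_zero := hU₀zero 0 le_rfl
      contDiffOn := hU₀smooth
      ode := hU₀ode
      tendsto_atTop := hU₀top
      hasDerivWithinAt_zero := hCmin }
  have hstrip : IsControlledStripProfile f c u z :=
    { contDiff := hu
      mem_Icc := fun x₁ x₂ _ => hurange x₁ x₂
      control_nonneg := fun x₁ x₂ _ => hznonneg x₁ x₂
      control_integrableOn := hzint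
      pde := hpde
      neumann := hneumann
      tendsto_atBot := tendstoUniformlyOn_zero_atBot (fun x₁ x₂ _ => (hurange x₁ x₂).1) hlim0
      tendsto_atTop := tendstoUniformlyOn_one_atTop (fun x₁ x₂ _ => (hurange x₁ x₂).2) hlim1
      tendsto_deriv := tendstoUniformlyOn_zero_cocompact fun ε hε =>
        (hgrad ε hε).imp fun _ hM x₁ hx₁ x₂ hx₂ => (hM x₁ hx₁ x₂ hx₂).1 }
  exact two_dim_cost_lower_bound_general hf.continuous
    (nonneg_on_unitInterval_of_deriv2_neg hf.continuous hf0 hf1 hf'') hprofile hstrip
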